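/- arXiv:2406.16857 — 2 statements merged into one kernel-verified Lean document; each statement's English description precedes it below -/
import Mathlib

section
/- For any ρ ∈ (0,1] and n ∈ ℕ, the sum over i from 0 to n of Γ(nρ+1)/(Γ(iρ+1)·Γ((n−i)ρ+1)) is at most 2^(nρ)/ρ. -/
/-!
With `x! = Γ(x + 1)`, the generalized binomial coefficient `C(a, b) = a! / (b! (a - b)!)` is the
`b`-th Fourier coefficient of `θ ↦ (1 + e^{iθ})^a` on `[-π, π]`, for every real `b`: for `b < 0` a
keyhole contour turns the Fourier integral into a beta integral, and the recurrence
`(b + 1) C(a, b + 1) = (a - b) C(a, b)` carries the identity to all `b`. Sampling at `b = jρ`,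
Poisson summation gives `∑_{j ∈ ℤ} C(a, jρ) = 2^a / ρ`. For `a = nρ` the terms with `j < 0` and
those with `j > n` form two equal tails. The tail is the integral over `(0, 1)` of a positive
multiple of the series `∑_m q^m sin ((m + 1)πρ)` with `q = x^ρ`, whose closed form has the sign of
`sin πρ ≥ 0`.
-/

open Real Set Filter Topology MeasureTheory

section Beta

variable {u v : ℝ}

theorem ofReal_beta_integrand (u v : ℝ) {x : ℝ} (hx : x ∈ Icc (0 : ℝ) 1) :
    ((x ^ (u - 1) * (1 - x) ^ (v - 1) : ℝ) : ℂ)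
      = (x : ℂ) ^ ((u : ℂ) - 1) * (1 - (x : ℂ)) ^ ((v : ℂ) - 1) := by
  rw [Complex.ofReal_mul, Complex.ofReal_cpow hx.1, Complex.ofReal_cpow (sub_nonneg.mpr hx.2)]
  push_cast
  rfl

theorem intervalIntegrable_beta (hu : 0 < u) (hv : 0 < v) :
    IntervalIntegrable (fun x : ℝ ↦ x ^ (u - 1) * (1 - x) ^ (v - 1)) volume 0 1 := by
  rw [intervalIntegrable_iff_integrableOn_Icc_of_le zero_le_one]
  have h := (intervalIntegrable_iff_integrableOn_Icc_of_le zero_le_one).mp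
    (Complex.betaIntegral_convergent (u := u) (v := v) (by simpa) (by simpa))
  refine h.re.congr ?_
  filter_upwards [ae_restrict_mem measurableSet_Icc] with x hx
  rw [← ofReal_beta_integrand u v hx]
  exact Complex.ofReal_re _

theorem ofReal_integral_beta (u v : ℝ) :
    ((∫ x in (0 : ℝ)..1, x ^ (u - 1) * (1 - x) ^ (v - 1) : ℝ) : ℂ) = Complex.betaIntegral u v := by
  rw [Complex.betaIntegral, ← intervalIntegral.integral_ofReal]
  refine intervalIntegral.integral_congr fun x hx ↦ ofReal_beta_integrand u v ?_
  rwa [uIcc_of_le zero_le_one] at hx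

theorem integral_beta (hu : 0 < u) (hv : 0 < v) :
    ∫ x in (0 : ℝ)..1, x ^ (u - 1) * (1 - x) ^ (v - 1) = ProbabilityTheory.beta u v := by
  rw [ProbabilityTheory.beta_eq_betaIntegralReal u v hu hv, ← ofReal_integral_beta,
    Complex.ofReal_re]

end Beta

/-- The generalized binomial coefficient `a! / (b! (a - b)!)` with `x! = Γ(x + 1)`. Since
`Real.Gamma` is `0` at its poles and division by `0` gives `0`, it vanishes when `b` or `a - b` is
a negative integer, in agreement with `1 / Γ` being entire. -/
noncomputable def gammaChoose (a b : ℝ) : ℝ :=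
  Gamma (a + 1) / (Gamma (b + 1) * Gamma (a - b + 1))

section GammaChoose

theorem gammaChoose_symm (a b : ℝ) : gammaChoose a (a - b) = gammaChoose a b := by
  rw [gammaChoose, gammaChoose, sub_sub_cancel, mul_comm (Gamma (b + 1))]

theorem gammaChoose_zero_right {a : ℝ} (ha : -1 < a) : gammaChoose a 0 = 1 := by
  have : Gamma (a + 1) ≠ 0 := (Gamma_pos_of_pos (by linarith)).ne'
  simp [gammaChoose, this]

theorem inv_Gamma_eq_self_mul_inv_Gamma_add_one (s : ℝ) :
    (Gamma s)⁻¹ = s * (Gamma (s + 1))⁻¹ := by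
  rcases eq_or_ne s 0 with rfl | hs
  · simp
  · rw [Gamma_add_one hs, mul_inv, mul_inv_cancel_left₀ hs]

theorem add_one_mul_gammaChoose_add_one (a b : ℝ) :
    (b + 1) * gammaChoose a (b + 1) = (a - b) * gammaChoose a b := by
  have h₁ := inv_Gamma_eq_self_mul_inv_Gamma_add_one (b + 1)
  have h₂ := inv_Gamma_eq_self_mul_inv_Gamma_add_one (a - b)
  simp only [gammaChoose, div_eq_mul_inv, mul_inv, show a - (b + 1) + 1 = a - b by ring, h₁, h₂]
  ring

theorem gammaChoose_neg {a b : ℝ} (hb : 0 < b) :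
    gammaChoose a (-b) = sin (π * b) / π * ProbabilityTheory.beta b (a + 1) := by
  have hΓb : Gamma b ≠ 0 := (Gamma_pos_of_pos hb).ne'
  have reflection : (Gamma (-b + 1))⁻¹ = sin (π * b) / π * Gamma b := by
    have h := congrArg (·⁻¹) (Gamma_mul_Gamma_one_sub b)
    simp only [mul_inv, inv_div] at h
    rw [← h, neg_add_eq_sub]
    field_simp
  rw [gammaChoose, ProbabilityTheory.beta, div_eq_mul_inv, mul_inv, reflection,
    show a - -b + 1 = b + (a + 1) by ring]
  ring

end GammaChoose

section Keyhole

variable {f : ℂ → ℂ} {s : ℂ}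

theorem exp_mem_closedBall_of_re_nonpos {w : ℂ} (hw : w.re ≤ 0) :
    Complex.exp w ∈ Metric.closedBall (0 : ℂ) 1 := by
  simpa [Complex.norm_exp] using hw

theorem two_mul_sin_mul_I (z : ℂ) :
    2 * Complex.sin z * Complex.I
      = Complex.exp (z * Complex.I) - Complex.exp (-(z * Complex.I)) := by
  rw [Complex.two_sin, mul_assoc, Complex.I_mul_I, neg_mul]
  ring

-- Cauchy's theorem for `w ↦ f (exp w) * exp (s * w)` on the rectangle `[u, 0] × [-π, π]`; under
-- `exp` its horizontal sides become the two edges of the cut `(-1, 0)` of a keyhole contour.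
theorem integral_exp_mul_I_eq_sin_mul_integral_add (hf : DiffContOnCl ℂ f (Metric.ball 0 1))
    (s : ℂ) {u : ℝ} (hu : u ≤ 0) :
    ∫ θ in -π..π, f (Complex.exp (θ * Complex.I)) * Complex.exp (s * (θ * Complex.I))
      = 2 * Complex.sin (π * s) * (∫ x in u..0, f (-Complex.exp x) * Complex.exp (s * x))
        + Complex.exp (s * u) * ∫ θ in -π..π,
            f (Complex.exp (u + θ * Complex.I)) * Complex.exp (s * (θ * Complex.I)) := by
  set F : ℂ → ℂ := fun w ↦ f (Complex.exp w) * Complex.exp (s * w) with hF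
  have continuousOn_F : ContinuousOn F {w | w.re ≤ 0} :=
    .mul (hf.continuousOn_ball.comp (by fun_prop) fun _ ↦ exp_mem_closedBall_of_re_nonpos)
      (by fun_prop)
  have differentiableOn_F : DifferentiableOn ℂ F {w | w.re < 0} :=
    .mul (hf.differentiableOn.comp (by fun_prop) fun w hw ↦ by simpa [Complex.norm_exp] using hw)
      (by fun_prop)
  have cauchy : (∫ x in u..0, F (x - π * Complex.I)) - (∫ x in u..0, F (x + π * Complex.I))
      + Complex.I * (∫ θ in -π..π, F (θ * Complex.I))
      - Complex.I * (∫ θ in -π..π, F (u + θ * Complex.I)) = 0 := by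
    have := Complex.integral_boundary_rect_eq_zero_of_continuousOn_of_differentiableOn F
      (u - π * Complex.I) (π * Complex.I)
      (continuousOn_F.mono fun w hw ↦ by simpa [hu] using (And.left hw).2)
      (differentiableOn_F.mono fun w hw ↦ by simpa [hu] using (And.left hw).2)
    simpa [← sub_eq_add_neg] using this
  have lower_side (x : ℝ) : F (x - π * Complex.I)
      = Complex.exp (-(π * s * Complex.I)) * (f (-Complex.exp x) * Complex.exp (s * x)) := by
    simp only [hF, Complex.exp_sub_pi_mul_I, mul_left_comm (Complex.exp (-_)), ← Complex.exp_add]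
    ring_nf
  have upper_side (x : ℝ) : F (x + π * Complex.I)
      = Complex.exp (π * s * Complex.I) * (f (-Complex.exp x) * Complex.exp (s * x)) := by
    simp only [hF, Complex.exp_add_pi_mul_I, mul_left_comm (Complex.exp (_ * Complex.I)),
      ← Complex.exp_add]
    ring_nf
  have left_side (θ : ℝ) : F (u + θ * Complex.I) = Complex.exp (s * u)
      * (f (Complex.exp (u + θ * Complex.I)) * Complex.exp (s * (θ * Complex.I))) := by
    simp only [hF, mul_left_comm (Complex.exp (s * u)), ← Complex.exp_add, mul_add]
  simp only [lower_side, upper_side, left_side, intervalIntegral.integral_const_mul] at cauchy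
  refine mul_left_cancel₀ Complex.I_ne_zero ?_
  linear_combination cauchy - (∫ x in u..0, f (-Complex.exp x) * Complex.exp (s * x))
    * two_mul_sin_mul_I (π * s)

theorem integrableOn_Iic_neg_exp_mul_exp (hf : ContinuousOn f (Metric.closedBall 0 1))
    (hs : 0 < s.re) :
    IntegrableOn (fun x : ℝ ↦ f (-Complex.exp x) * Complex.exp (s * x)) (Iic 0) := by
  have mapsTo : MapsTo (fun x : ℝ ↦ -Complex.exp x) (Iic 0) (Metric.closedBall 0 1) :=
    fun x hx ↦ by simpa [Complex.norm_exp] using hx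
  obtain ⟨M, hM⟩ := (isCompact_closedBall (0 : ℂ) 1).exists_bound_of_continuousOn hf
  refine (integrableOn_exp_mul_complex_Iic hs 0).bdd_mul
    ((hf.comp (by fun_prop) mapsTo).aestronglyMeasurable measurableSet_Iic) (c := M) ?_
  filter_upwards [ae_restrict_mem measurableSet_Iic] with x hx using hM _ (mapsTo hx)

theorem integral_exp_mul_I_eq_sin_mul_integral_Iic (hf : DiffContOnCl ℂ f (Metric.ball 0 1))
    (hs : 0 < s.re) :
    ∫ θ in -π..π, f (Complex.exp (θ * Complex.I)) * Complex.exp (s * (θ * Complex.I))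
      = 2 * Complex.sin (π * s)
        * ∫ x in Iic (0 : ℝ), f (-Complex.exp x) * Complex.exp (s * x) := by
  obtain ⟨M, hM⟩ := (isCompact_closedBall (0 : ℂ) 1).exists_bound_of_continuousOn
    hf.continuousOn_ball
  set G : ℝ → ℂ := fun u ↦ ∫ θ in -π..π,
    f (Complex.exp (u + θ * Complex.I)) * Complex.exp (s * (θ * Complex.I))
  have norm_G_le (u : ℝ) (hu : u ≤ 0) : ‖G u‖ ≤ M * Real.exp (‖s‖ * π) * |π - -π| := by
    refine intervalIntegral.norm_integral_le_of_norm_le_const fun θ hθ ↦ ?_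
    rw [uIoc_of_le (by linarith [pi_pos])] at hθ
    rw [norm_mul]
    gcongr
    · exact (norm_nonneg _).trans (hM 0 (by simp))
    · exact hM _ (exp_mem_closedBall_of_re_nonpos (by simpa using hu))
    · refine (Complex.norm_exp_le_exp_norm _).trans ?_
      rw [norm_mul, norm_mul, Complex.norm_I, mul_one, Complex.norm_real, Real.norm_eq_abs]
      gcongr
      exact abs_le.mpr ⟨hθ.1.le, hθ.2⟩
  have main_tendsto := intervalIntegral_tendsto_integral_Iic 0
    (integrableOn_Iic_neg_exp_mul_exp hf.continuousOn_ball hs) tendsto_id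
  have error_tendsto : Tendsto (fun u : ℝ ↦ Complex.exp (s * u) * G u) atBot (𝓝 0) := by
    refine Tendsto.zero_mul_isBoundedUnder_le ?_ (isBoundedUnder_of_eventually_le
      ((eventually_le_atBot 0).mono norm_G_le))
    simpa [Complex.tendsto_exp_nhds_zero_iff] using tendsto_id.const_mul_atBot hs
  refine tendsto_nhds_unique (tendsto_const_nhds.congr' ?_)
    (by simpa using (main_tendsto.const_mul (2 * Complex.sin (π * s))).add error_tendsto)
  filter_upwards [eventually_le_atBot 0] with u hu
    using integral_exp_mul_I_eq_sin_mul_integral_add hf s hu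

theorem integral_exp_mul_I_eq_sin_mul_integral_cpow (hf : DiffContOnCl ℂ f (Metric.ball 0 1))
    (hs : 0 < s.re) :
    ∫ θ in -π..π, f (Complex.exp (θ * Complex.I)) * Complex.exp (s * (θ * Complex.I))
      = 2 * Complex.sin (π * s) * ∫ x in (0 : ℝ)..1, (x : ℂ) ^ (s - 1) * f (-x) := by
  have image_exp : Real.exp '' Iic 0 = Ioc 0 1 := by rw [image_exp_Iic, Real.exp_zero]
  rw [integral_exp_mul_I_eq_sin_mul_integral_Iic hf hs, intervalIntegral.integral_of_le zero_le_one,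
    ← image_exp, integral_image_eq_integral_abs_deriv_smul measurableSet_Iic
      (fun x _ ↦ (Real.hasDerivAt_exp x).hasDerivWithinAt) Real.exp_injective.injOn]
  congr 2 with x
  have cpow_exp : (Real.exp x : ℂ) * (Real.exp x : ℂ) ^ (s - 1) = Complex.exp (s * x) := by
    rw [Complex.cpow_def_of_ne_zero (by exact_mod_cast (Real.exp_pos x).ne'),
      ← Complex.ofReal_log (Real.exp_pos x).le, Real.log_exp, Complex.ofReal_exp, ← Complex.exp_add]
    ring_nf
  rw [abs_of_pos (Real.exp_pos x), Complex.real_smul, ← mul_assoc, cpow_exp, Complex.ofReal_exp,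
    mul_comm]

end Keyhole

section CircleIntegral

variable {a : ℂ}

theorem re_one_add_nonneg {z : ℂ} (hz : ‖z‖ ≤ 1) : 0 ≤ (1 + z).re := by
  have := (abs_le.mp ((Complex.abs_re_le_norm z).trans hz)).1
  rw [Complex.add_re, Complex.one_re]
  linarith

theorem continuousAt_one_add_cpow (ha : 0 < a.re) {z : ℂ} (hz : ‖z‖ ≤ 1) :
    ContinuousAt (fun w : ℂ ↦ (1 + w) ^ a) z :=
  (Complex.continuousAt_cpow_const_of_re_pos (.inl (re_one_add_nonneg hz)) ha).comp
    (f := fun w ↦ 1 + w) (by fun_prop)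

theorem diffContOnCl_one_add_cpow (ha : 0 < a.re) :
    DiffContOnCl ℂ (fun z : ℂ ↦ (1 + z) ^ a) (Metric.ball 0 1) where
  differentiableOn z hz := by
    have hz : 1 + z ∈ Complex.slitPlane :=
      Complex.mem_slitPlane_of_norm_lt_one (by simpa using hz)
    exact ((differentiableAt_id.const_add 1).cpow_const hz).differentiableWithinAt
  continuousOn z hz := by
    rw [closure_ball 0 one_ne_zero, mem_closedBall_zero_iff] at hz
    exact (continuousAt_one_add_cpow ha hz).continuousWithinAt

theorem continuous_one_add_exp_mul_I_cpow (ha : 0 < a.re) :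
    Continuous fun θ : ℝ ↦ (1 + Complex.exp (θ * Complex.I)) ^ a :=
  continuous_iff_continuousAt.mpr fun θ ↦
    (continuousAt_one_add_cpow ha (Complex.norm_exp_ofReal_mul_I θ).le).comp
      (f := fun θ : ℝ ↦ Complex.exp (θ * Complex.I)) (by fun_prop)

theorem integral_one_add_exp_mul_I_cpow (ha : 0 < a.re) :
    ∫ θ in -π..π, (1 + Complex.exp (θ * Complex.I)) ^ a = 2 * π := by
  have mean_value : circleAverage (fun z : ℂ ↦ (1 + z) ^ a) 0 1 = 1 := by
    rw [DiffContOnCl.circleAverage (by simpa using diffContOnCl_one_add_cpow ha)]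
    simp
  rw [circleAverage_eq_integral_add (-π), inv_smul_eq_iff₀ two_pi_pos.ne',
    intervalIntegral.integral_comp_add_right (fun θ ↦ (1 + circleMap 0 1 θ) ^ a)] at mean_value
  simpa [circleMap, two_mul] using mean_value

theorem one_add_exp_mul_I_mem_slitPlane {θ : ℝ} (hθ : θ ∈ Ioo (-π) π) :
    1 + Complex.exp (θ * Complex.I) ∈ Complex.slitPlane := by
  have half_pos : 0 < cos (θ / 2) :=
    cos_pos_of_mem_Ioo ⟨by linarith [hθ.1], by linarith [hθ.2]⟩
  have re_pos : 0 < 1 + cos θ := by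
    have := cos_sq (θ / 2)
    rw [mul_div_cancel₀ θ two_ne_zero] at this
    nlinarith
  exact .inl (by simpa [Complex.exp_ofReal_mul_I_re] using re_pos)

theorem hasDerivAt_one_add_exp_mul_I_cpow_mul_exp (a b : ℂ) {θ : ℝ} (hθ : θ ∈ Ioo (-π) π) :
    HasDerivAt (fun θ : ℝ ↦ (1 + Complex.exp (θ * Complex.I)) ^ (a + 1)
        * Complex.exp (-(b + 1) * (θ * Complex.I)))
      (Complex.I * ((a - b) * ((1 + Complex.exp (θ * Complex.I)) ^ a
          * Complex.exp (-b * (θ * Complex.I)))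
        - (b + 1) * ((1 + Complex.exp (θ * Complex.I)) ^ a
          * Complex.exp (-(b + 1) * (θ * Complex.I))))) θ := by
  have mem_slitPlane := one_add_exp_mul_I_mem_slitPlane hθ
  have hasDerivAt_arg : HasDerivAt (fun z : ℂ ↦ z * Complex.I) Complex.I (θ : ℂ) := by
    simpa using (hasDerivAt_id (θ : ℂ)).mul_const Complex.I
  have hasDerivAt_cpow :=
    (hasDerivAt_arg.cexp.const_add 1).cpow_const (c := a + 1) mem_slitPlane
  refine (hasDerivAt_cpow.mul
    (hasDerivAt_arg.const_mul (-(b + 1))).cexp).comp_ofReal.congr_deriv ?_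
  have exp_shift : Complex.exp (-b * (θ * Complex.I))
      = Complex.exp (θ * Complex.I) * Complex.exp (-(b + 1) * (θ * Complex.I)) := by
    rw [← Complex.exp_add]
    ring_nf
  rw [Complex.cpow_add _ _ (Complex.slitPlane_ne_zero mem_slitPlane), Complex.cpow_one,
    add_sub_cancel_right, exp_shift]
  ring

theorem add_one_mul_integral_one_add_exp_mul_I_cpow_mul_exp (ha : 0 < a.re) (b : ℂ) :
    (b + 1) * ∫ θ in -π..π, (1 + Complex.exp (θ * Complex.I)) ^ a
        * Complex.exp (-(b + 1) * (θ * Complex.I))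
      = (a - b) * ∫ θ in -π..π, (1 + Complex.exp (θ * Complex.I)) ^ a
        * Complex.exp (-b * (θ * Complex.I)) := by
  set Φ : ℂ → ℝ → ℂ := fun b θ ↦ (1 + Complex.exp (θ * Complex.I)) ^ a
    * Complex.exp (-b * (θ * Complex.I))
  set Ψ : ℝ → ℂ := fun θ ↦ (1 + Complex.exp (θ * Complex.I)) ^ (a + 1)
    * Complex.exp (-(b + 1) * (θ * Complex.I)) with hΨ
  have intervalIntegrable_Φ (b c : ℂ) : IntervalIntegrable (fun θ ↦ c * Φ b θ) volume (-π) π :=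
    ((continuous_one_add_exp_mul_I_cpow ha).mul
      (by fun_prop)).const_mul c |>.intervalIntegrable _ _
  have re_add_one_pos : 0 < (a + 1).re := by
    rw [Complex.add_re, Complex.one_re]
    linarith
  have continuous_Ψ : Continuous Ψ :=
    (continuous_one_add_exp_mul_I_cpow re_add_one_pos).mul (by fun_prop)
  have Ψ_eq_zero {θ : ℝ} (hθ : Complex.exp (θ * Complex.I) = -1) : Ψ θ = 0 := by
    have exponent_ne_zero : a + 1 ≠ 0 := fun h ↦ by simp [h] at re_add_one_pos
    simp [hΨ, hθ, exponent_ne_zero]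
  have integral_deriv_eq_zero :
      ∫ θ in -π..π, Complex.I * ((a - b) * Φ b θ - (b + 1) * Φ (b + 1) θ) = 0 := by
    rw [intervalIntegral.integral_eq_sub_of_hasDerivAt_of_le (by linarith [pi_pos])
      continuous_Ψ.continuousOn (fun θ hθ ↦ hasDerivAt_one_add_exp_mul_I_cpow_mul_exp a b hθ)
      (((intervalIntegrable_Φ _ _).sub (intervalIntegrable_Φ _ _)).const_mul _),
      Ψ_eq_zero (by simp), Ψ_eq_zero (by simp), sub_zero]
  rw [intervalIntegral.integral_const_mul, intervalIntegral.integral_sub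
    (intervalIntegrable_Φ _ _) (intervalIntegrable_Φ _ _), intervalIntegral.integral_const_mul,
    intervalIntegral.integral_const_mul] at integral_deriv_eq_zero
  exact (sub_eq_zero.mp ((mul_eq_zero_iff_left Complex.I_ne_zero).mp integral_deriv_eq_zero)).symm

theorem integral_one_add_exp_mul_I_cpow_mul_exp_of_neg {a : ℝ} (ha : 0 < a) {b : ℝ} (hb : b < 0) :
    ∫ θ in -π..π, (1 + Complex.exp (θ * Complex.I)) ^ (a : ℂ) * Complex.exp (-b * (θ * Complex.I))
      = 2 * π * gammaChoose a b := by
  have keyhole := integral_exp_mul_I_eq_sin_mul_integral_cpow (s := -b)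
    (diffContOnCl_one_add_cpow (a := a) (by simpa)) (by simpa)
  have beta_integral : ∫ x in (0 : ℝ)..1, (x : ℂ) ^ (-b - 1 : ℂ) * (1 + -(x : ℂ)) ^ (a : ℂ)
      = ProbabilityTheory.beta (-b) (a + 1) := by
    rw [← integral_beta (neg_pos.mpr hb) (by linarith), ofReal_integral_beta, Complex.betaIntegral]
    simp [sub_eq_add_neg]
  rw [keyhole, beta_integral, ← neg_neg b, gammaChoose_neg (neg_pos.mpr hb)]
  push_cast
  field_simp

theorem integral_one_add_exp_mul_I_cpow_mul_exp {a : ℝ} (ha : 0 < a) (b : ℝ) :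
    ∫ θ in -π..π, (1 + Complex.exp (θ * Complex.I)) ^ (a : ℂ) * Complex.exp (-b * (θ * Complex.I))
      = 2 * π * gammaChoose a b := by
  have of_lt (k : ℕ) : ∀ b : ℝ, b < k → ∫ θ in -π..π,
      (1 + Complex.exp (θ * Complex.I)) ^ (a : ℂ) * Complex.exp (-b * (θ * Complex.I))
        = 2 * π * gammaChoose a b := by
    induction k with
    | zero => exact fun b hb ↦ integral_one_add_exp_mul_I_cpow_mul_exp_of_neg ha (by simpa using hb)
    | succ k ih =>
      intro b hb
      rcases eq_or_ne b 0 with rfl | hb₀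
      · simpa [gammaChoose_zero_right (by linarith : -1 < a)]
          using integral_one_add_exp_mul_I_cpow (a := a) (by simpa)
      push_cast at hb
      have recurrence := add_one_mul_integral_one_add_exp_mul_I_cpow_mul_exp (a := a) (by simpa)
        ((b - 1 : ℝ) : ℂ)
      rw [ih (b - 1) (by linarith)] at recurrence
      have gammaChoose_recurrence :
          b * (gammaChoose a b : ℂ) = (a - (b - 1)) * gammaChoose a (b - 1) := by
        have := add_one_mul_gammaChoose_add_one a (b - 1)
        rw [sub_add_cancel] at this
        exact_mod_cast this
      push_cast [sub_add_cancel] at recurrence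
      refine mul_left_cancel₀ (Complex.ofReal_ne_zero.mpr hb₀) ?_
      linear_combination recurrence - 2 * π * gammaChoose_recurrence
  obtain ⟨k, hk⟩ := exists_nat_gt b
  exact of_lt k b hk

end CircleIntegral

section Tails

theorem min_mul_one_sub_le_one_sub_rpow {ρ x : ℝ} (hρ : 0 ≤ ρ) (hx : x ∈ Icc (0 : ℝ) 1) :
    min ρ 1 * (1 - x) ≤ 1 - x ^ ρ := by
  rcases le_total ρ 1 with h | h
  · rw [min_eq_left h]
    have := rpow_one_add_le_one_add_mul_self (s := x - 1) (by linarith [hx.1]) hρ h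
    rw [add_sub_cancel] at this
    linarith
  · rw [min_eq_right h, one_mul]
    exact sub_le_sub_left (rpow_le_self_of_le_one hx.1 hx.2 h) 1

variable {a c ρ : ℝ}

theorem hasSum_rpow_mul_one_sub_rpow (a c : ℝ) (hρ : 0 < ρ) {x : ℝ} (hx : x ∈ Ioo (0 : ℝ) 1) :
    HasSum (fun m : ℕ ↦ x ^ (m * ρ + c - 1) * (1 - x) ^ a)
      (x ^ (c - 1) * (1 - x) ^ a / (1 - x ^ ρ)) := by
  have geometric := (hasSum_geometric_of_lt_one (rpow_nonneg hx.1.le ρ)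
    (rpow_lt_one hx.1.le hx.2 hρ)).mul_left (x ^ (c - 1) * (1 - x) ^ a)
  refine geometric.congr_fun fun m ↦ ?_
  rw [add_sub_assoc, rpow_add hx.1, mul_comm (m : ℝ), rpow_mul_natCast hx.1.le]
  ring

theorem integrableOn_rpow_mul_one_sub_rpow_div (ha : 0 < a) (hc : 0 < c) (hρ : 0 < ρ) :
    IntegrableOn (fun x : ℝ ↦ x ^ (c - 1) * (1 - x) ^ a / (1 - x ^ ρ)) (Ioo 0 1) := by
  have dominating := (intervalIntegrable_iff_integrableOn_Ioo_of_le zero_le_one).mp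
    ((intervalIntegrable_beta hc ha).const_mul (min ρ 1)⁻¹)
  refine dominating.mono' (Measurable.aestronglyMeasurable (by fun_prop)) ?_
  filter_upwards [ae_restrict_mem measurableSet_Ioo] with x hx
  have one_sub_pos : 0 < 1 - x := sub_pos.mpr hx.2
  have min_pos : 0 < min ρ 1 := lt_min hρ one_pos
  have le_one_sub_rpow := min_mul_one_sub_le_one_sub_rpow hρ.le (Ioo_subset_Icc_self hx)
  have denom_pos : 0 < 1 - x ^ ρ := (mul_pos min_pos one_sub_pos).trans_le le_one_sub_rpow
  have x_pos : 0 < x := hx.1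
  rw [Real.norm_of_nonneg (by positivity), div_le_iff₀ denom_pos]
  calc x ^ (c - 1) * (1 - x) ^ a
      = (min ρ 1)⁻¹ * (x ^ (c - 1) * (1 - x) ^ (a - 1)) * (min ρ 1 * (1 - x)) := by
        rw [rpow_sub_one one_sub_pos.ne']
        field_simp
    _ ≤ (min ρ 1)⁻¹ * (x ^ (c - 1) * (1 - x) ^ (a - 1)) * (1 - x ^ ρ) := by gcongr

theorem hasSum_mul_beta (ha : 0 < a) (hc : 0 < c) (hρ : 0 < ρ) {w : ℕ → ℝ} {C : ℝ}
    (hw : ∀ m, |w m| ≤ C) :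
    HasSum (fun m : ℕ ↦ w m * ProbabilityTheory.beta (m * ρ + c) (a + 1))
      (∫ x in Ioo (0 : ℝ) 1, ∑' m : ℕ, w m * (x ^ (m * ρ + c - 1) * (1 - x) ^ a)) := by
  have integral_term (m : ℕ) : w m * ProbabilityTheory.beta (m * ρ + c) (a + 1)
      = ∫ x in Ioo (0 : ℝ) 1, w m * (x ^ (m * ρ + c - 1) * (1 - x) ^ a) := by
    rw [integral_const_mul, ← integral_beta (by positivity) (by positivity), add_sub_cancel_right,
      intervalIntegral.integral_of_le zero_le_one, integral_Ioc_eq_integral_Ioo]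
  have norm_le {x : ℝ} (hx : x ∈ Ioo (0 : ℝ) 1) (m : ℕ) :
      ‖w m * (x ^ (m * ρ + c - 1) * (1 - x) ^ a)‖ ≤ C * (x ^ (m * ρ + c - 1) * (1 - x) ^ a) := by
    have nonneg : 0 ≤ x ^ (m * ρ + c - 1) * (1 - x) ^ a :=
      mul_nonneg (rpow_nonneg hx.1.le _) (rpow_nonneg (sub_nonneg.mpr hx.2.le) _)
    rw [norm_mul, Real.norm_of_nonneg nonneg]
    exact mul_le_mul_of_nonneg_right (hw m) nonneg
  have bound_hasSum {x : ℝ} (hx : x ∈ Ioo (0 : ℝ) 1) :=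
    (hasSum_rpow_mul_one_sub_rpow a c hρ hx).mul_left C
  have ae_mem_Ioo := ae_restrict_mem (μ := volume) (measurableSet_Ioo (a := (0 : ℝ)) (b := 1))
  simp only [integral_term]
  refine hasSum_integral_of_dominated_convergence
    (fun m x ↦ C * (x ^ (m * ρ + c - 1) * (1 - x) ^ a))
    (fun m ↦ Measurable.aestronglyMeasurable (by fun_prop)) (fun m ↦ ?_) ?_ ?_ ?_
  · filter_upwards [ae_mem_Ioo] with x hx using norm_le hx m
  · filter_upwards [ae_mem_Ioo] with x hx using (bound_hasSum hx).summable
  · refine ((integrableOn_rpow_mul_one_sub_rpow_div ha hc hρ).const_mul C).congr ?_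
    filter_upwards [ae_mem_Ioo] with x hx using (bound_hasSum hx).tsum_eq.symm
  · filter_upwards [ae_mem_Ioo] with x hx using
      ((bound_hasSum hx).summable.of_norm_bounded (norm_le hx)).hasSum

theorem hasSum_gammaChoose_neg (ha : 0 < a) (hc : 0 < c) (hρ : 0 < ρ) :
    HasSum (fun m : ℕ ↦ gammaChoose a (-(m * ρ + c)))
      (∫ x in Ioo (0 : ℝ) 1,
        ∑' m : ℕ, sin (π * (m * ρ + c)) / π * (x ^ (m * ρ + c - 1) * (1 - x) ^ a)) := by
  have weight_le (m : ℕ) : |sin (π * (m * ρ + c)) / π| ≤ 1 / π := by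
    rw [abs_div, abs_of_pos pi_pos]
    exact div_le_div_of_nonneg_right (abs_sin_le_one _) pi_pos.le
  exact (hasSum_mul_beta ha hc hρ weight_le).congr_fun fun m ↦ gammaChoose_neg (by positivity)

theorem summable_gammaChoose_int_mul (ha : 0 < a) (hρ : 0 < ρ) :
    Summable fun j : ℤ ↦ gammaChoose a (j * ρ) := by
  have left_tail : Summable fun m : ℕ ↦ gammaChoose a (-(m * ρ + ρ)) :=
    (hasSum_gammaChoose_neg ha hρ hρ).summable
  have right_tail : Summable fun m : ℕ ↦ gammaChoose a (m * ρ) := by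
    obtain ⟨N, hN⟩ := exists_nat_gt (a / ρ)
    rw [div_lt_iff₀ hρ] at hN
    rw [← summable_nat_add_iff N]
    refine (hasSum_gammaChoose_neg ha (sub_pos.mpr hN) hρ).summable.congr fun m ↦ ?_
    rw [← gammaChoose_symm]
    congr 1
    push_cast
    ring
  refine .of_nat_of_neg_add_one (by simpa using right_tail) (left_tail.congr fun m ↦ ?_)
  congr 1
  push_cast
  ring

theorem hasSum_pow_mul_sin {q : ℝ} (hq : |q| < 1) (θ : ℝ) :
    HasSum (fun m : ℕ ↦ q ^ m * sin ((m + 1) * θ))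
      (sin θ / ((1 - q * cos θ) ^ 2 + (q * sin θ) ^ 2)) := by
  have geometric := (hasSum_geometric_of_norm_lt_one (ξ := q * Complex.exp (θ * Complex.I))
    (by simpa [Complex.norm_exp_ofReal_mul_I] using hq)).mul_left (Complex.exp (θ * Complex.I))
  convert Complex.hasSum_im geometric using 1
  · ext m
    rw [mul_pow, ← Complex.exp_nat_mul, mul_left_comm, ← Complex.exp_add,
      show (θ * Complex.I + m * (θ * Complex.I) : ℂ) = ((m + 1) * θ : ℝ) * Complex.I by
        push_cast; ring, ← Complex.ofReal_pow, Complex.im_ofReal_mul,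
      Complex.exp_ofReal_mul_I_im]
  · rw [← div_eq_mul_inv, Complex.div_im, Complex.normSq_apply]
    simp only [Complex.sub_re, Complex.sub_im, Complex.one_re, Complex.one_im,
      Complex.re_ofReal_mul, Complex.im_ofReal_mul, Complex.exp_ofReal_mul_I_re,
      Complex.exp_ofReal_mul_I_im]
    ring

theorem tsum_pow_mul_sin_nonneg {q θ : ℝ} (hq : |q| < 1) (hθ : 0 ≤ sin θ) :
    0 ≤ ∑' m : ℕ, q ^ m * sin ((m + 1) * θ) := by
  rw [(hasSum_pow_mul_sin hq θ).tsum_eq]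
  positivity

theorem tsum_gammaChoose_neg_nonneg (ha : 0 < a) (hρ₀ : 0 < ρ) (hρ₁ : ρ ≤ 1) :
    0 ≤ ∑' m : ℕ, gammaChoose a (-(m * ρ + ρ)) := by
  rw [(hasSum_gammaChoose_neg ha hρ₀ hρ₀).tsum_eq]
  refine setIntegral_nonneg measurableSet_Ioo fun x hx ↦ ?_
  have kernel_eq (m : ℕ) : sin (π * (m * ρ + ρ)) / π * (x ^ (m * ρ + ρ - 1) * (1 - x) ^ a)
      = x ^ (ρ - 1) * (1 - x) ^ a / π * ((x ^ ρ) ^ m * sin ((m + 1) * (π * ρ))) := by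
    rw [add_sub_assoc, rpow_add hx.1, mul_comm (m : ℝ), rpow_mul_natCast hx.1.le]
    ring_nf
  have sin_nonneg : 0 ≤ sin (π * ρ) :=
    sin_nonneg_of_nonneg_of_le_pi (by positivity) (mul_le_of_le_one_right pi_pos.le hρ₁)
  have abs_lt_one : |x ^ ρ| < 1 := by
    rw [abs_of_nonneg (rpow_nonneg hx.1.le ρ)]
    exact rpow_lt_one hx.1.le hx.2 hρ₀
  simp only [kernel_eq, tsum_mul_left]
  have prefactor_nonneg : 0 ≤ x ^ (ρ - 1) * (1 - x) ^ a / π :=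
    div_nonneg (mul_nonneg (rpow_nonneg hx.1.le _) (rpow_nonneg (sub_nonneg.mpr hx.2.le) _))
      pi_pos.le
  exact mul_nonneg prefactor_nonneg (tsum_pow_mul_sin_nonneg abs_lt_one sin_nonneg)

end Tails

section Poisson

open FourierTransform in
theorem tsum_fourier_eq_apply_zero {f : ℝ → ℂ} (hf : Continuous f) (hf₁ : ∀ x, 1 ≤ |x| → f x = 0)
    (hsum : Summable fun j : ℤ ↦ 𝓕 f j) : ∑' j : ℤ, 𝓕 f j = f 0 := by
  have eventually_zero : f =ᶠ[cocompact ℝ] 0 := by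
    filter_upwards [(tendsto_norm_cocompact_atTop (E := ℝ)).eventually_ge_atTop 1] with x hx
      using hf₁ x hx
  have poisson := Real.tsum_eq_tsum_fourier_of_rpow_decay_of_summable hf one_lt_two
    (eventually_zero.trans_isBigO (Asymptotics.isBigO_zero _ _)) hsum 0
  have apply_int_eq_zero (n : ℤ) (hn : n ≠ 0) : f (0 + n) = 0 :=
    hf₁ _ (by rw [zero_add]; exact_mod_cast Int.one_le_abs hn)
  rw [tsum_eq_single 0 apply_int_eq_zero] at poisson
  simpa using poisson.symm

open FourierTransform in
theorem fourier_indicator_Icc_comp_mul_left (f : ℝ → ℂ) {T L : ℝ} (hT : 0 ≤ T) (hL : 0 < L)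
    (w : ℝ) :
    𝓕 (fun x ↦ (Icc (-T) T).indicator f (L * x)) w
      = (L : ℂ)⁻¹ * ∫ t in -T..T, f t * Complex.exp (-(2 * π * w * t / L) * Complex.I) := by
  have rescale := Measure.integral_comp_mul_left (fun t : ℝ ↦
    (Icc (-T) T).indicator (fun t ↦ f t * Complex.exp (-(2 * π * w * t / L) * Complex.I)) t) L
  rw [integral_indicator measurableSet_Icc, integral_Icc_eq_integral_Ioc,
    ← intervalIntegral.integral_of_le (by linarith), abs_of_pos (inv_pos.mpr hL),
    Complex.real_smul, Complex.ofReal_inv] at rescale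
  rw [fourier_real_eq_integral_exp_smul, ← rescale]
  congr 1 with x
  rw [indicator_mul_left, smul_eq_mul, mul_comm]
  congr 2
  have : (L : ℂ) ≠ 0 := Complex.ofReal_ne_zero.mpr hL.ne'
  push_cast
  field_simp

theorem tsum_integral_mul_exp_eq_mul_apply_zero {f : ℝ → ℂ} {T L : ℝ} (hT : 0 < T) (hTL : T ≤ L)
    (hf : ContinuousOn f (Icc (-T) T)) (hf_neg : f (-T) = 0) (hf_pos : f T = 0)
    (hsum : Summable fun j : ℤ ↦
      ∫ t in -T..T, f t * Complex.exp (-(2 * π * j * t / L) * Complex.I)) :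
    ∑' j : ℤ, ∫ t in -T..T, f t * Complex.exp (-(2 * π * j * t / L) * Complex.I) = L * f 0 := by
  have hL : 0 < L := hT.trans_le hTL
  set g : ℝ → ℂ := (Icc (-T) T).indicator f with hg
  have continuous_g : Continuous g := by
    refine continuous_indicator (fun t ht ↦ ?_) (by rwa [closure_Icc])
    rw [frontier_Icc (by linarith)] at ht
    rcases ht with rfl | rfl <;> assumption
  have g_eq_zero (t : ℝ) (ht : T ≤ |t|) : g t = 0 := by
    refine indicator_apply_eq_zero.mpr fun hmem ↦ ?_
    rcases eq_or_eq_neg_of_abs_eq ((abs_le.mpr hmem).antisymm ht) with rfl | rfl <;> assumption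
  have fourier_coeff (j : ℤ) :=
    fourier_indicator_Icc_comp_mul_left f hT.le hL j
  have poisson := tsum_fourier_eq_apply_zero (f := fun x ↦ g (L * x)) (by fun_prop)
    (fun x hx ↦ g_eq_zero _ (by
      rw [abs_mul, abs_of_pos hL]
      exact hTL.trans (le_mul_of_one_le_right hL.le hx)))
    (by simpa only [hg, fourier_coeff, Complex.ofReal_intCast] using hsum.mul_left (L : ℂ)⁻¹)
  have g_apply_zero : g 0 = f 0 := indicator_of_mem (by simp [hT.le]) f
  simp only [hg, fourier_coeff, Complex.ofReal_intCast, tsum_mul_left, mul_zero] at poisson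
  rw [← g_apply_zero, hg, ← poisson, mul_inv_cancel_left₀ (Complex.ofReal_ne_zero.mpr hL.ne')]

theorem hasSum_gammaChoose_int_mul {a ρ : ℝ} (ha : 0 < a) (hρ₀ : 0 < ρ) (hρ₂ : ρ ≤ 2) :
    HasSum (fun j : ℤ ↦ gammaChoose a (j * ρ)) (2 ^ a / ρ) := by
  have summable := summable_gammaChoose_int_mul ha hρ₀
  have coeff (j : ℤ) : ∫ θ in -π..π, (1 + Complex.exp (θ * Complex.I)) ^ (a : ℂ)
      * Complex.exp (-(2 * π * j * θ / (2 * π / ρ : ℝ)) * Complex.I)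
        = (2 * π * gammaChoose a (j * ρ) : ℝ) := by
    have := integral_one_add_exp_mul_I_cpow_mul_exp ha (j * ρ)
    push_cast at this ⊢
    rw [← this]
    refine intervalIntegral.integral_congr fun θ _ ↦ ?_
    have : (π : ℂ) ≠ 0 := Complex.ofReal_ne_zero.mpr pi_ne_zero
    have : (ρ : ℂ) ≠ 0 := Complex.ofReal_ne_zero.mpr hρ₀.ne'
    congr 2
    field_simp
  have poisson := tsum_integral_mul_exp_eq_mul_apply_zero
    (f := fun θ ↦ (1 + Complex.exp (θ * Complex.I)) ^ (a : ℂ)) (T := π) (L := 2 * π / ρ) pi_pos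
    (by rw [le_div_iff₀ hρ₀]; nlinarith [pi_pos])
    (continuous_one_add_exp_mul_I_cpow (by simpa)).continuousOn
    (by simp [ha.ne']) (by simp [ha.ne'])
    (by simpa only [coeff] using Complex.summable_ofReal.mpr (summable.mul_left (2 * π)))
  have apply_zero : (1 + Complex.exp ((0 : ℝ) * Complex.I)) ^ (a : ℂ) = (2 ^ a : ℝ) := by
    rw [Complex.ofReal_cpow zero_le_two]
    norm_num
  simp only [coeff, apply_zero, ← Complex.ofReal_tsum, tsum_mul_left, ← Complex.ofReal_mul,
    Complex.ofReal_inj] at poisson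
  have tsum_eq : ∑' j : ℤ, gammaChoose a (j * ρ) = 2 ^ a / ρ :=
    mul_left_cancel₀ two_pi_pos.ne' (by rw [poisson]; ring)
  exact tsum_eq ▸ summable.hasSum

end Poisson

theorem sum_gammaChoose_add_two_mul_tsum {ρ : ℝ} (hρ₀ : 0 < ρ) (hρ₂ : ρ ≤ 2) {n : ℕ}
    (hn : n ≠ 0) :
    ∑ i ∈ Finset.range (n + 1), gammaChoose (n * ρ) (i * ρ)
      + 2 * ∑' m : ℕ, gammaChoose (n * ρ) (-(m * ρ + ρ)) = 2 ^ (n * ρ) / ρ := by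
  have ha : 0 < n * ρ := by positivity
  have hasSum_left := (hasSum_gammaChoose_neg ha hρ₀ hρ₀).summable.hasSum
  set tail := ∑' m : ℕ, gammaChoose (n * ρ) (-(m * ρ + ρ))
  have hasSum_right : HasSum (fun i : ℕ ↦ gammaChoose (n * ρ) (i * ρ))
      (∑ i ∈ Finset.range (n + 1), gammaChoose (n * ρ) (i * ρ) + tail) := by
    rw [add_comm, ← hasSum_nat_add_iff]
    refine hasSum_left.congr_fun fun m ↦ ?_
    rw [← gammaChoose_symm]
    congr 1
    push_cast
    ring
  have hasSum_int : HasSum (fun j : ℤ ↦ gammaChoose (n * ρ) (j * ρ))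
      (∑ i ∈ Finset.range (n + 1), gammaChoose (n * ρ) (i * ρ) + tail + tail) := by
    refine .of_nat_of_neg_add_one (by simpa using hasSum_right) (hasSum_left.congr_fun fun m ↦ ?_)
    congr 1
    push_cast
    ring
  rw [two_mul, ← add_assoc]
  exact hasSum_int.unique (hasSum_gammaChoose_int_mul ha hρ₀ hρ₂)

/-- Sum of fractional (Gamma-function) binomial coefficients:
for `ρ ∈ (0,1]` and `n ∈ ℕ`,
`∑_{i=0}^n Γ(nρ+1)/(Γ(iρ+1)·Γ((n−i)ρ+1)) ≤ 2^(nρ)/ρ`. -/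
theorem fractional_binomial_sum_le (ρ : ℝ) (hρ0 : 0 < ρ) (hρ1 : ρ ≤ 1) (n : ℕ) :
    ∑ i ∈ Finset.range (n + 1),
        Real.Gamma ((n : ℝ) * ρ + 1) /
          (Real.Gamma ((i : ℝ) * ρ + 1) * Real.Gamma (((n : ℝ) - (i : ℝ)) * ρ + 1))
      ≤ (2 : ℝ) ^ ((n : ℝ) * ρ) / ρ := by
  rcases eq_or_ne n 0 with rfl | hn
  · simpa using (one_le_inv₀ hρ0).mpr hρ1
  have identity := sum_gammaChoose_add_two_mul_tsum hρ0 (by linarith) hn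
  have tail_nonneg := tsum_gammaChoose_neg_nonneg (a := n * ρ) (by positivity) hρ0 hρ1
  calc _ = ∑ i ∈ Finset.range (n + 1), gammaChoose (n * ρ) (i * ρ) := by
        simp only [gammaChoose, sub_mul]
    _ ≤ 2 ^ (n * ρ) / ρ := by linarith
end

section
/- Let G = (δ : G₁ → G₀, ▷) be a crossed module of groups. Then the double group D(G) satisfies the interchange law: for squares X, Y, Z, W ∈ D(G) for which all compositions below are defined, (X ⊙_h Y) ⊙_v (Z ⊙_h W) = (X ⊙_v Z) ⊙_h (Y ⊙_v W). -/
/-!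
Only the fillers need comparing. Both sides begin with `x₁ ▷ E₂` and end with `w₁ ▷ E₃`;
between them stands `E₁ * (w₁ ▷ z₁ ▷ E₄)` on the left and `(x₁ ▷ y₁ ▷ E₄) * E₁` on the right.
By the second Peiffer relation, moving `E₁` past an element of `G₁` acts on that element by
`δ E₁`, which is exactly the discrepancy between the two paths `x₁ y₁` and `w₁ z₁` around `X`.
-/

/-- A square `(x, y, z, w, E)`, with the top, right, bottom and left edges in this order and
filler `E`: the raw data of an element of the double group `D(G)`. The condition on `δ E` is kept
apart, as `DoubleGroupSquare.BoundaryEq`. -/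
@[ext]
structure DoubleGroupSquare (G₀ G₁ : Type*) where
  top : G₀
  right : G₀
  bottom : G₀
  left : G₀
  filler : G₁

namespace DoubleGroupSquare

variable {G₀ G₁ : Type*}

/-- The condition `δ(E) = x y z⁻¹ w⁻¹` for membership in `D(G)`, with the inverses cleared so that
it makes sense without a group structure. -/
def BoundaryEq [Mul G₀] (δ : G₁ → G₀) (X : DoubleGroupSquare G₀ G₁) : Prop :=
  δ X.filler * (X.left * X.bottom) = X.top * X.right

/-- The horizontal composite `X ⊙_h Y`, meaningful when `X.right = Y.left`; the formula is used
for all pairs of squares. -/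
def hcomp [Mul G₀] [Mul G₁] (act : G₀ → G₁ → G₁) (X Y : DoubleGroupSquare G₀ G₁) :
    DoubleGroupSquare G₀ G₁ where
  top := X.top * Y.top
  right := Y.right
  bottom := X.bottom * Y.bottom
  left := X.left
  filler := act X.top Y.filler * X.filler

/-- The vertical composite `X ⊙_v Z`, meaningful when `X.bottom = Z.top`; the formula is used
for all pairs of squares. -/
def vcomp [Mul G₀] [Mul G₁] (act : G₀ → G₁ → G₁) (X Z : DoubleGroupSquare G₀ G₁) :
    DoubleGroupSquare G₀ G₁ where
  top := X.top
  right := X.right * Z.right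
  bottom := Z.bottom
  left := X.left * Z.left
  filler := X.filler * act X.left Z.filler

theorem BoundaryEq.filler_mul_act_act [Mul G₀] [Mul G₁] {δ : G₁ → G₀} {act : G₀ → G₁ → G₁}
    (hact_mul : ∀ g h E, act (g * h) E = act g (act h E))
    (peiffer : ∀ E F, act (δ E) F * E = E * F)
    {X : DoubleGroupSquare G₀ G₁} (hX : X.BoundaryEq δ) (F : G₁) :
    X.filler * act X.left (act X.bottom F) = act X.top (act X.right F) * X.filler :=
  calc
    X.filler * act X.left (act X.bottom F)
      = act (δ X.filler) (act X.left (act X.bottom F)) * X.filler := (peiffer _ _).symm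
    _ = act (δ X.filler * (X.left * X.bottom)) F * X.filler := by simp only [hact_mul]
    _ = act (X.top * X.right) F * X.filler := by rw [hX]
    _ = act X.top (act X.right F) * X.filler := by rw [hact_mul]

end DoubleGroupSquare

open DoubleGroupSquare

theorem double_group_interchange_general {G₀ G₁ : Type*} [Mul G₀] [Semigroup G₁]
    (δ : G₁ → G₀) (act : G₀ → G₁ → G₁)
    (hact_mul : ∀ g h E, act (g * h) E = act g (act h E))
    (hact_hom : ∀ g E F, act g (E * F) = act g E * act g F)
    (peiffer : ∀ E F, act (δ E) F * E = E * F)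
    {X Y Z W : DoubleGroupSquare G₀ G₁} (hX : X.BoundaryEq δ)
    (hXY : X.right = Y.left) (hXZ : X.bottom = Z.top) :
    vcomp act (hcomp act X Y) (hcomp act Z W) = hcomp act (vcomp act X Z) (vcomp act Y W) := by
  have fillers_eq : act X.top Y.filler * X.filler * act X.left (act Z.top W.filler * Z.filler) =
      act X.top (Y.filler * act Y.left W.filler) * (X.filler * act X.left Z.filler) := by
    rw [← hXY, ← hXZ]
    calc
      _ = act X.top Y.filler * (X.filler * act X.left (act X.bottom W.filler)) *
            act X.left Z.filler := by simp only [hact_hom, mul_assoc]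
      _ = act X.top Y.filler * (act X.top (act X.right W.filler) * X.filler) *
            act X.left Z.filler := by rw [hX.filler_mul_act_act hact_mul peiffer]
      _ = _ := by simp only [hact_hom, mul_assoc]
  exact DoubleGroupSquare.ext rfl rfl rfl rfl fillers_eq

/-- **Interchange law in the double group of a crossed module of groups.**
For composable squares `X = (x₁,y₁,z₁,w₁,E₁)`, `Y = (x₂,y₂,z₂,y₁,E₂)`,
`Z = (z₁,y₃,z₃,w₃,E₃)`, `W = (z₂,y₄,z₄,y₃,E₄)` of `D(G)` we have
`(X ⊙_h Y) ⊙_v (Z ⊙_h W) = (X ⊙_v Z) ⊙_h (Y ⊙_v W)`. -/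
theorem double_group_interchange {G₀ G₁ : Type*} [Group G₀] [Group G₁]
    (δ : G₁ →* G₀) (act : G₀ → G₁ → G₁)
    (hact_one : ∀ E, act 1 E = E)
    (hact_mul : ∀ g h E, act (g * h) E = act g (act h E))
    (hact_hom : ∀ g E F, act g (E * F) = act g E * act g F)
    (cm1 : ∀ g E, δ (act g E) = g * δ E * g⁻¹)
    (cm2 : ∀ E F, act (δ E) F = E * F * E⁻¹)
    (x₁ y₁ z₁ w₁ x₂ y₂ z₂ y₃ z₃ w₃ y₄ z₄ : G₀) (E₁ E₂ E₃ E₄ : G₁)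
    (hE₁ : δ E₁ = x₁ * y₁ * z₁⁻¹ * w₁⁻¹)
    (hE₂ : δ E₂ = x₂ * y₂ * z₂⁻¹ * y₁⁻¹)
    (hE₃ : δ E₃ = z₁ * y₃ * z₃⁻¹ * w₃⁻¹)
    (hE₄ : δ E₄ = z₂ * y₄ * z₄⁻¹ * y₃⁻¹) :
    ((x₁ * x₂, y₂ * y₄, z₃ * z₄, w₁ * w₃,
        (act x₁ E₂ * E₁) * act w₁ (act z₁ E₄ * E₃)) : G₀ × G₀ × G₀ × G₀ × G₁) =
      ((x₁ * x₂, y₂ * y₄, z₃ * z₄, w₁ * w₃,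
        act x₁ (E₂ * act y₁ E₄) * (E₁ * act w₁ E₃)) : G₀ × G₀ × G₀ × G₀ × G₁) := by
  have interchange := double_group_interchange_general δ act hact_mul hact_hom
    (fun E F => by rw [cm2, inv_mul_cancel_right])
    (X := ⟨x₁, y₁, z₁, w₁, E₁⟩) (Y := ⟨x₂, y₂, z₂, y₁, E₂⟩)
    (Z := ⟨z₁, y₃, z₃, w₃, E₃⟩) (W := ⟨z₂, y₄, z₄, y₃, E₄⟩)
    (by simp [BoundaryEq, hE₁, mul_assoc]) rfl rfl
  exact congrArg (fun Q => (Q.top, Q.right, Q.bottom, Q.left, Q.filler)) interchange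
end
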